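/- arXiv:2407.21677 — 3 statements merged into one kernel-verified Lean document; each statement's English description precedes it below -/
import Mathlib

section
/- C¹ estimate for the affine reparametrization. Let a < b, let G : [a,b] → ℝ be C¹ with ε := ‖G − Id‖_{C¹([a,b])} ≤ min(1/2, (b−a)/4), and set c = G(a), d = G(b) (so c < d). Define η : [c,d] → [a,b] by η(x) = a + ((b−a)/(d−c))·(x−c). Then ‖η − Id‖_{C¹([c,d])} ≤ (7 + 4/(b−a))·ε. -/
/-!
Write `L = b - a` and `D = G b - G a`. The endpoint displacements `G a - a` and `G b - b` are at most
`ε ≤ L / 4` in absolute value, so `|D - L| ≤ 2 ε` and `D ≥ L / 2`. The map `η - Id` is affine on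
`[G a, G b]` with endpoint values `a - G a` and `b - G b`, hence is bounded by `ε` there, while
`|η' - 1| = |L - D| / D ≤ 4 ε / L`. This gives the constant `1 + 4 / L`, which is better than
`7 + 4 / L`, and uses only the values of `G` at the endpoints.
-/

open Set

/-- C¹ estimate for the affine reparametrization: if `G` is `C¹` on `[a,b]` with
`‖G − Id‖_{C¹([a,b])} ≤ ε ≤ min(1/2, (b−a)/4)`, and `c = G(a)`, `d = G(b)`, then
`c < d` and the affine map `η(x) = a + ((b−a)/(d−c))·(x−c)` from `[c,d]` to `[a,b]`
satisfies `‖η − Id‖_{C¹([c,d])} ≤ (7 + 4/(b−a))·ε`. -/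
theorem c1_estimate_affine_reparametrization (a b ε : ℝ) (hab : a < b) (G G' : ℝ → ℝ)
    (hG : ∀ x ∈ Icc a b, HasDerivWithinAt G (G' x) (Icc a b) x)
    (hbound : ∀ x ∈ Icc a b, |G x - x| + |G' x - 1| ≤ ε)
    (hε : ε ≤ min (1 / 2) ((b - a) / 4)) :
    G a < G b ∧
    ∀ x ∈ Icc (G a) (G b),
      |a + (b - a) / (G b - G a) * (x - G a) - x| + |(b - a) / (G b - G a) - 1|
        ≤ (7 + 4 / (b - a)) * ε := by
  have hL : 0 < b - a := sub_pos.2 hab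
  have hε4 : ε ≤ (b - a) / 4 := hε.trans (min_le_right _ _)
  have ha : |G a - a| ≤ ε := by
    linarith [hbound a (left_mem_Icc.2 hab.le), abs_nonneg (G' a - 1)]
  have hb : |G b - b| ≤ ε := by
    linarith [hbound b (right_mem_Icc.2 hab.le), abs_nonneg (G' b - 1)]
  have hε0 : 0 ≤ ε := (abs_nonneg _).trans ha
  obtain ⟨ha1, ha2⟩ := abs_le.1 ha
  obtain ⟨hb1, hb2⟩ := abs_le.1 hb
  have hD2 : (b - a) / 2 ≤ G b - G a := by linarith
  have hD : 0 < G b - G a := by linarith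
  refine ⟨by linarith, fun x hx => ?_⟩
  have h1 : |a + (b - a) / (G b - G a) * (x - G a) - x| ≤ ε := by
    -- `η x - x` is the convex combination of its endpoint values, with weights over `G b - G a`.
    have e : a + (b - a) / (G b - G a) * (x - G a) - x
        = ((G b - x) * (a - G a) + (x - G a) * (b - G b)) / (G b - G a) := by
      field_simp
      ring
    have hx1 : 0 ≤ x - G a := sub_nonneg.2 hx.1
    have hx2 : 0 ≤ G b - x := sub_nonneg.2 hx.2
    rw [e, abs_div, abs_of_pos hD, div_le_iff₀ hD, abs_le]
    constructor <;> nlinarith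
  have h2 : |(b - a) / (G b - G a) - 1| ≤ 4 / (b - a) * ε := by
    have e : (b - a) / (G b - G a) - 1 = ((b - a) - (G b - G a)) / (G b - G a) := by
      field_simp
    rw [e, abs_div, abs_of_pos hD]
    calc |(b - a) - (G b - G a)| / (G b - G a) ≤ (2 * ε) / ((b - a) / 2) := by
          gcongr
          rw [abs_le]
          constructor <;> linarith
      _ = 4 / (b - a) * ε := by
          field_simp
          ring
  linarith
end

section
/- Integration-by-parts identity for the first-order term in the Fuglede argument. Let σ > −1 and let g₁, g₂ : ℝ → ℝ be Lipschitz functions with g₁(−(1+σ)ℓ) = g₂(−(1+σ)ℓ) and g₁((1+σ)ℓ) = g₂((1+σ)ℓ). Then (derivatives taken almost everywhere) −∫_{I_σ} (x/(1+σ))·(g₁'(x) − ũ₁'(x)) dx + ∫_{I_σ} (x/(1+σ))·(g₂'(x) − ũ₂'(x)) dx = (1/(1+σ))·∫_{I_σ} (g₁ − g₂) dx − (1+σ)·m. -/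
/-!
Write `L = 1 + σ`. Since the lower profile is the negative of the upper one, the left-hand side is
`-∫ (x/L) (g₁' - g₂') + ∫ (x/L) · 2ũ'`.

Lipschitz functions are absolutely continuous, so `g₁` and `g₂` can be integrated by parts against
`x/L` (`integral_mul_deriv_of_lipschitz`); their boundary terms cancel because they agree at the
endpoints, and `(1/L) ∫ (g₁ - g₂)` remains.

For the arcs, `ũ' (x) = -(x/L) / √(1 - (x/L)²)` in the interior of `I_σ` (`hasDerivAt_utilde`),
and `y ↦ y √(1 - y²) - arcsin y` is an explicit antiderivative of
`-2y² / √(1 - y²)`; as `arcsin ℓ = π/3`, its increment over `[-ℓ, ℓ]` is exactly `-m`, and rescaling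
multiplies it by `L` (`integral_mul_deriv_utilde`).
-/

open MeasureTheory intervalIntegral

/-- `ℓ = √3/2`, the half-width of the unit-radius standard lens. -/
noncomputable def ell : ℝ := Real.sqrt 3 / 2

/-- `m = 2π/3 − √3/2`, the area of the unit-radius standard lens. -/
noncomputable def mlens : ℝ := 2 * Real.pi / 3 - Real.sqrt 3 / 2

/-- The profile `u(x) = √(1−x²) − 1/2` for `|x| ≤ ℓ`, extended by `0`. -/
noncomputable def ulens (x : ℝ) : ℝ :=
  if |x| ≤ ell then Real.sqrt (1 - x ^ 2) - 1 / 2 else 0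

/-- The rescaled profile `ũ(x) = (1+σ)·u(x/(1+σ))`. -/
noncomputable def utilde (σ x : ℝ) : ℝ := (1 + σ) * ulens (x / (1 + σ))

lemma ell_pos : 0 < ell := by unfold ell; positivity

lemma ell_sq : ell ^ 2 = 3 / 4 := by
  unfold ell
  rw [div_pow, Real.sq_sqrt (by norm_num)]
  norm_num

lemma sqrt_one_sub_ell_sq : Real.sqrt (1 - ell ^ 2) = 1 / 2 := by
  rw [ell_sq, show (1 : ℝ) - 3 / 4 = (1 / 2) ^ 2 by norm_num]
  exact Real.sqrt_sq (by norm_num)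

lemma arcsin_ell : Real.arcsin ell = Real.pi / 3 := by
  unfold ell
  rw [← Real.sin_pi_div_three]
  exact Real.arcsin_sin (by linarith [Real.pi_pos]) (by linarith [Real.pi_pos])

/-- The arc stays away from the vertical tangents `y = ±1`. -/
lemma one_sub_sq_pos {y : ℝ} (hy : |y| ≤ ell) : 0 < 1 - y ^ 2 := by
  have h : y ^ 2 ≤ ell ^ 2 := sq_le_sq' (abs_le.mp hy).1 (abs_le.mp hy).2
  linarith [ell_sq]

lemma abs_div_le {L x : ℝ} (hL : 0 < L) (hx : x ∈ Set.Icc (-(L * ell)) (L * ell)) :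
    |x / L| ≤ ell := by
  rw [abs_le, le_div_iff₀ hL, div_le_iff₀ hL]
  constructor <;> linarith [hx.1, hx.2]

lemma hasDerivAt_sqrt_one_sub_sq {y : ℝ} (hy : |y| ≤ ell) :
    HasDerivAt (fun z : ℝ => Real.sqrt (1 - z ^ 2)) (-(y / Real.sqrt (1 - y ^ 2))) y := by
  have h := (((hasDerivAt_id y).pow 2).const_sub 1).sqrt (one_sub_sq_pos hy).ne'
  refine h.congr_deriv ?_
  simp only [id, Pi.pow_apply]
  have := Real.sqrt_pos.mpr (one_sub_sq_pos hy)
  field_simp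
  norm_num

/-- In the interior of `I_σ` the rescaled profile is a smooth arc. At the endpoints it has a corner,
which is why the interval is open. -/
lemma hasDerivAt_utilde {σ x : ℝ} (hσ : -1 < σ)
    (hx : x ∈ Set.Ioo (-((1 + σ) * ell)) ((1 + σ) * ell)) :
    HasDerivAt (utilde σ)
      (-(x / (1 + σ) / Real.sqrt (1 - (x / (1 + σ)) ^ 2))) x := by
  have hL : 0 < 1 + σ := by linarith
  have h1 : HasDerivAt (fun z : ℝ => z / (1 + σ)) (1 / (1 + σ)) x :=
    (hasDerivAt_id x).div_const _
  have h2 := (hasDerivAt_sqrt_one_sub_sq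
    (abs_div_le hL (Set.Ioo_subset_Icc_self hx))).comp x h1
  have h3 := (h2.sub_const (1 / 2)).const_mul (1 + σ)
  refine (h3.congr_deriv ?_).congr_of_eventuallyEq ?_
  · field_simp
  · filter_upwards [Ioo_mem_nhds hx.1 hx.2] with z hz
    simp only [utilde, ulens, if_pos (abs_div_le hL (Set.Ioo_subset_Icc_self hz)),
      Function.comp]

lemma hasDerivAt_arc_primitive {y : ℝ} (hy : |y| ≤ ell) :
    HasDerivAt (fun z : ℝ => z * Real.sqrt (1 - z ^ 2) - Real.arcsin z)
      (-(2 * y ^ 2 / Real.sqrt (1 - y ^ 2))) y := by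
  have hp := one_sub_sq_pos hy
  have h := ((hasDerivAt_id y).mul (hasDerivAt_sqrt_one_sub_sq hy)).sub
    (Real.hasDerivAt_arcsin (x := y) (by rintro rfl; norm_num at hp)
      (by rintro rfl; norm_num at hp))
  refine h.congr_deriv ?_
  have hs := Real.sqrt_pos.mpr hp
  have hsq := Real.sq_sqrt hp.le
  simp only [id]
  field_simp
  linear_combination hsq

/-- The first-order weight times the explicit derivative of `ũ` is continuous on the closed
interval `I_σ`. -/
lemma continuousOn_arc_slope {L : ℝ} (hL : 0 < L) :
    ContinuousOn (fun x : ℝ => x / L * -(x / L / Real.sqrt (1 - (x / L) ^ 2)))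
      (Set.Icc (-(L * ell)) (L * ell)) := by
  have h : ∀ x ∈ Set.Icc (-(L * ell)) (L * ell), Real.sqrt (1 - (x / L) ^ 2) ≠ 0 :=
    fun x hx => (Real.sqrt_pos.mpr (one_sub_sq_pos (abs_div_le hL hx))).ne'
  fun_prop (disch := assumption)

lemma neg_le_self_ell {L : ℝ} (hL : 0 < L) : -(L * ell) ≤ L * ell := by
  have := mul_pos hL ell_pos
  linarith

lemma intervalIntegrable_mul_deriv_utilde {σ : ℝ} (hσ : -1 < σ) :
    IntervalIntegrable (fun x => x / (1 + σ) * deriv (utilde σ) x) volume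
      (-((1 + σ) * ell)) ((1 + σ) * ell) := by
  have hL : 0 < 1 + σ := by linarith
  have hle := neg_le_self_ell hL
  refine IntervalIntegrable.congr_uIoo (ContinuousOn.intervalIntegrable_of_Icc hle
    (continuousOn_arc_slope hL)) ?_
  rw [Set.uIoo_of_le hle]
  intro x hx
  simp only [(hasDerivAt_utilde hσ hx).deriv]

/-- The contribution of the arcs, computed from an explicit primitive rather than by parts. -/
lemma integral_mul_deriv_utilde {σ : ℝ} (hσ : -1 < σ) :
    2 * ∫ x in (-((1 + σ) * ell))..((1 + σ) * ell), x / (1 + σ) * deriv (utilde σ) x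
      = -((1 + σ) * mlens) := by
  have hL : 0 < 1 + σ := by linarith
  have hle := neg_le_self_ell hL
  have hcongr : ∫ x in (-((1 + σ) * ell))..((1 + σ) * ell), x / (1 + σ) * deriv (utilde σ) x
      = ∫ x in (-((1 + σ) * ell))..((1 + σ) * ell),
          x / (1 + σ) * -(x / (1 + σ) / Real.sqrt (1 - (x / (1 + σ)) ^ 2)) := by
    refine integral_congr_Ioo_of_le hle fun x hx => ?_
    simp only [(hasDerivAt_utilde hσ hx).deriv]
  have hderiv : ∀ x ∈ Set.uIcc (-((1 + σ) * ell)) ((1 + σ) * ell),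
      HasDerivAt (fun x => (1 + σ) / 2 * (x / (1 + σ) * Real.sqrt (1 - (x / (1 + σ)) ^ 2)
          - Real.arcsin (x / (1 + σ))))
        (x / (1 + σ) * -(x / (1 + σ) / Real.sqrt (1 - (x / (1 + σ)) ^ 2))) x := by
    intro x hx
    rw [Set.uIcc_of_le hle] at hx
    have h1 : HasDerivAt (fun z : ℝ => z / (1 + σ)) (1 / (1 + σ)) x :=
      (hasDerivAt_id x).div_const _
    have h2 := ((hasDerivAt_arc_primitive (abs_div_le hL hx)).comp x h1).const_mul ((1 + σ) / 2)
    refine h2.congr_deriv ?_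
    field_simp
  have e1 : (1 + σ) * ell / (1 + σ) = ell := by field_simp
  rw [hcongr, integral_eq_sub_of_hasDerivAt hderiv
    (ContinuousOn.intervalIntegrable_of_Icc hle (continuousOn_arc_slope hL))]
  simp only [neg_div, e1, neg_sq, Real.arcsin_neg, sqrt_one_sub_ell_sq, arcsin_ell]
  unfold mlens ell
  ring

lemma intervalIntegrable_mul_deriv_of_lipschitz {g : ℝ → ℝ} {K : NNReal} (hg : LipschitzWith K g)
    (c a b : ℝ) : IntervalIntegrable (fun x => x / c * deriv g x) volume a b :=
  (hg.lipschitzOnWith.absolutelyContinuousOnInterval.intervalIntegrable_deriv).continuousOn_mul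
    (by fun_prop)

/-- Integration by parts against the linear weight `x / c`. -/
lemma integral_mul_deriv_of_lipschitz {g : ℝ → ℝ} {K : NNReal} (hg : LipschitzWith K g)
    (c a b : ℝ) :
    ∫ x in a..b, x / c * deriv g x = b / c * g b - a / c * g a - 1 / c * ∫ x in a..b, g x := by
  have hw : LipschitzWith ‖(1 / c : ℝ)‖₊ (fun x : ℝ => x / c) := by
    refine LipschitzWith.of_dist_le_mul fun x y => le_of_eq ?_
    rw [Real.dist_eq, Real.dist_eq, coe_nnnorm, Real.norm_eq_abs, ← abs_mul]
    ring_nf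
  have h := hw.lipschitzOnWith.absolutelyContinuousOnInterval.integral_mul_deriv_eq_deriv_mul
    (hg.lipschitzOnWith.absolutelyContinuousOnInterval (a := a) (b := b))
  rw [h, ← intervalIntegral.integral_const_mul]
  simp

/-- Integration-by-parts identity for the first-order term in the Fuglede argument:
for `σ > −1` and Lipschitz `g₁, g₂` agreeing at the endpoints of
`I_σ = [−(1+σ)ℓ, (1+σ)ℓ]`, with `ũ₁ = utilde σ`, `ũ₂ = −utilde σ`,
`−∫_{I_σ} (x/(1+σ))·(g₁' − ũ₁') + ∫_{I_σ} (x/(1+σ))·(g₂' − ũ₂')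
  = (1/(1+σ))·∫_{I_σ} (g₁ − g₂) − (1+σ)·m`. -/
theorem lens_integration_by_parts (σ : ℝ) (hσ : -1 < σ) (g₁ g₂ : ℝ → ℝ)
    (K₁ K₂ : NNReal) (hg₁ : LipschitzWith K₁ g₁) (hg₂ : LipschitzWith K₂ g₂)
    (hbl : g₁ (-((1 + σ) * ell)) = g₂ (-((1 + σ) * ell)))
    (hbr : g₁ ((1 + σ) * ell) = g₂ ((1 + σ) * ell)) :
    -(∫ x in (-((1 + σ) * ell))..((1 + σ) * ell),
        x / (1 + σ) * (deriv g₁ x - deriv (utilde σ) x))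
      + (∫ x in (-((1 + σ) * ell))..((1 + σ) * ell),
          x / (1 + σ) * (deriv g₂ x - deriv (fun y => -utilde σ y) x))
      = (1 / (1 + σ)) * (∫ x in (-((1 + σ) * ell))..((1 + σ) * ell), (g₁ x - g₂ x))
        - (1 + σ) * mlens := by
  have hu := integral_mul_deriv_utilde hσ
  have iu := intervalIntegrable_mul_deriv_utilde hσ
  have i₁ := intervalIntegrable_mul_deriv_of_lipschitz hg₁ (1 + σ) (-((1 + σ) * ell))
    ((1 + σ) * ell)
  have i₂ := intervalIntegrable_mul_deriv_of_lipschitz hg₂ (1 + σ) (-((1 + σ) * ell))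
    ((1 + σ) * ell)
  simp only [deriv.fun_neg, sub_neg_eq_add, mul_sub, mul_add]
  rw [intervalIntegral.integral_sub i₁ iu, intervalIntegral.integral_add i₂ iu,
    intervalIntegral.integral_sub (hg₁.continuous.intervalIntegrable _ _)
      (hg₂.continuous.intervalIntegrable _ _),
    integral_mul_deriv_of_lipschitz hg₁, integral_mul_deriv_of_lipschitz hg₂, hbl, hbr]
  linear_combination hu
end

section
/- Lipschitz continuity of the Riesz interaction energy. Let α ∈ (0, 2) and R > 0, and set C = 4π·(2R)^{2−α}/(2−α). For all Lebesgue-measurable sets E, F ⊆ B_R (the open ball of radius R in ℝ²), one has | ∫_E ∫_E |x − y|^{−α} dx dy − ∫_F ∫_F |x − y|^{−α} dx dy | ≤ C·vol(E Δ F). -/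
open MeasureTheory
open scoped symmDiff

/-!
Write `k x y = |x - y|^{-α}` and `M = 2π(2R)^{2-α}/(2-α)`, so that `C = 2M`. For `x ∈ B_R`
and `G ⊆ B_R`, the translate `G - x` lies in `B_{2R}`, so by polar coordinates the potential
`∫_G k x y dy` is at most `∫_{B_{2R}} |z|^{-α} dz = M` (`lintegral_riesz_le`). With the mutual
energy `J(A, B) = ∫_A ∫_B k`, symmetric by Tonelli, the inclusion `E ⊆ F ∪ (E \ F)` gives
`J(E, E) ≤ J(F, F) + J(F, E \ F) + J(E \ F, E) ≤ J(F, F) + 2M vol(E \ F)` (`riesz_energy_le`);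
exchanging `E` and `F` bounds the absolute value. All of this is done with `ℝ≥0∞`-valued
integrals; finiteness of `J` identifies them with the Bochner integrals of the statement
(`riesz_integral_eq_toReal`).
-/

/-- The Riesz kernel `|x - y|^{-α}` on the plane with values in `ℝ≥0∞`. On the diagonal it takes
the real value of `0 ^ (-α)`, which is finite; the diagonal is a null set. -/
noncomputable def rieszKernel (α : ℝ) (x y : EuclideanSpace ℝ (Fin 2)) : ENNReal :=
  ENNReal.ofReal (dist x y ^ (-α))

lemma measurable_rieszKernel (α : ℝ) :
    Measurable (Function.uncurry (rieszKernel α)) := by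
  unfold rieszKernel Function.uncurry
  fun_prop

/-- The truncated radial profile `r ↦ 1_{r < 2R} r^{-α}` has planar integral
`2π(2R)^{2-α}/(2-α)`, by integration in polar coordinates. -/
lemma lintegral_radial (α R : ℝ) (hα : α < 2) (hR : 0 < R) :
    ∫⁻ z : EuclideanSpace ℝ (Fin 2),
        ENNReal.ofReal ((Set.Iio (2 * R)).indicator (fun r : ℝ => r ^ (-α)) ‖z‖)
      = ENNReal.ofReal (2 * Real.pi * (2 * R) ^ ((2 : ℝ) - α) / (2 - α)) := by
  set f : ℝ → ℝ := (Set.Iio (2 * R)).indicator (fun r : ℝ => r ^ (-α)) with hf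
  -- On the half-line, the polar weight turns the profile into `r ^ (1 - α)` on `(0, 2R)`.
  have hEq : Set.EqOn (fun y : ℝ => y ^ (Module.finrank ℝ (EuclideanSpace ℝ (Fin 2)) - 1) • f y)
      ((Set.Iio (2 * R)).indicator (fun r : ℝ => r ^ (1 - α))) (Set.Ioi 0) := by
    intro y hy
    have hy : 0 < y := hy
    by_cases h : y < 2 * R
    · simp [hf, h, sub_eq_add_neg, Real.rpow_add hy]
    · simp [hf, h]
  have hint : IntegrableOn (fun r : ℝ => r ^ (1 - α)) (Set.Ioo 0 (2 * R)) := by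
    rw [← integrableOn_Ioc_iff_integrableOn_Ioo,
      ← intervalIntegrable_iff_integrableOn_Ioc_of_le (by positivity)]
    exact intervalIntegral.intervalIntegrable_rpow' (by linarith)
  have hI : Integrable (fun z : EuclideanSpace ℝ (Fin 2) => f ‖z‖) := by
    rw [integrable_fun_norm_addHaar, integrableOn_congr_fun hEq measurableSet_Ioi, IntegrableOn,
      integrable_indicator_iff measurableSet_Iio, IntegrableOn,
      Measure.restrict_restrict measurableSet_Iio, Set.Iio_inter_Ioi]
    exact hint
  rw [← ofReal_integral_eq_lintegral_ofReal hI]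
  · congr 1
    rw [integral_fun_norm_addHaar, setIntegral_congr_fun measurableSet_Ioi hEq,
      setIntegral_indicator measurableSet_Iio, Set.Ioi_inter_Iio,
      ← integral_Ioc_eq_integral_Ioo,
      ← intervalIntegral.integral_of_le (by positivity), integral_rpow (Or.inl (by linarith)),
      Measure.real, EuclideanSpace.volume_ball_fin_two]
    have h2 : (1 - α + 1) = 2 - α := by ring
    rw [h2, Real.zero_rpow (by linarith)]
    simp [Real.pi_pos.le]
    ring
  · refine Filter.Eventually.of_forall fun z => ?_
    exact Set.indicator_apply_nonneg fun _ => Real.rpow_nonneg (norm_nonneg z) _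

/-- The Riesz potential of a subset of `B_R` is at most `2π(2R)^{2-α}/(2-α)` on `B_R`. -/
lemma lintegral_riesz_le (α R : ℝ) (hα : α < 2) (hR : 0 < R)
    {G : Set (EuclideanSpace ℝ (Fin 2))} (hG : MeasurableSet G) (hGsub : G ⊆ Metric.ball 0 R)
    {x : EuclideanSpace ℝ (Fin 2)} (hx : x ∈ Metric.ball 0 R) :
    ∫⁻ y in G, rieszKernel α x y
      ≤ ENNReal.ofReal (2 * Real.pi * (2 * R) ^ ((2 : ℝ) - α) / (2 - α)) := by
  rw [← lintegral_radial α R hα hR,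
    ← lintegral_sub_right_eq_self (μ := volume) _ x]
  refine le_trans ?_ (setLIntegral_le_lintegral G _)
  refine setLIntegral_mono' hG fun y hy => ?_
  have h1 := mem_ball_zero_iff.1 hx
  have h2 := mem_ball_zero_iff.1 (hGsub hy)
  have h3 : ‖y - x‖ < 2 * R := by linarith [norm_sub_le y x]
  rw [Set.indicator_of_mem (Set.mem_Iio.2 h3), rieszKernel, dist_comm, dist_eq_norm]

/-- The mutual energy of `A, B ⊆ B_R` is bounded by the potential bound times `vol A`. -/
lemma mutual_energy_le (α R : ℝ) (hα : α < 2) (hR : 0 < R)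
    {A B : Set (EuclideanSpace ℝ (Fin 2))} (hA : MeasurableSet A) (hB : MeasurableSet B)
    (hAsub : A ⊆ Metric.ball 0 R) (hBsub : B ⊆ Metric.ball 0 R) :
    ∫⁻ x in A, ∫⁻ y in B, rieszKernel α x y
      ≤ ENNReal.ofReal (2 * Real.pi * (2 * R) ^ ((2 : ℝ) - α) / (2 - α)) * volume A := by
  rw [← setLIntegral_const]
  exact setLIntegral_mono' hA fun x hx => lintegral_riesz_le α R hα hR hB hBsub (hAsub hx)

/-- One-sided Lipschitz bound for the energy. -/
lemma riesz_energy_le (α R : ℝ) (hα : α < 2) (hR : 0 < R)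
    {E F : Set (EuclideanSpace ℝ (Fin 2))} (hE : MeasurableSet E) (hF : MeasurableSet F)
    (hEsub : E ⊆ Metric.ball 0 R) (hFsub : F ⊆ Metric.ball 0 R) :
    ∫⁻ x in E, ∫⁻ y in E, rieszKernel α x y
      ≤ (∫⁻ x in F, ∫⁻ y in F, rieszKernel α x y)
        + 2 * (ENNReal.ofReal (2 * Real.pi * (2 * R) ^ ((2 : ℝ) - α) / (2 - α))
          * volume (E \ F)) := by
  have hsplit : ∀ h : EuclideanSpace ℝ (Fin 2) → ENNReal,
      ∫⁻ x in E, h x ≤ (∫⁻ x in F, h x) + ∫⁻ x in E \ F, h x := fun h =>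
    (lintegral_mono_set (by simp)).trans (lintegral_union_le h F (E \ F))
  have hD : E \ F ⊆ Metric.ball 0 R := Set.sdiff_subset.trans hEsub
  have hDm : MeasurableSet (E \ F) := hE.diff hF
  have h1 := mutual_energy_le α R hα hR hDm hE hD hEsub
  have h2 : ∫⁻ x in F, ∫⁻ y in E \ F, rieszKernel α x y
      ≤ ENNReal.ofReal (2 * Real.pi * (2 * R) ^ ((2 : ℝ) - α) / (2 - α)) * volume (E \ F) := by
    -- By Tonelli and symmetry of the kernel, the small set can be taken as the outer one.
    rw [lintegral_lintegral_swap (measurable_rieszKernel α).aemeasurable]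
    have hsymm : ∀ x y, rieszKernel α x y = rieszKernel α y x := fun x y => by
      simp only [rieszKernel, dist_comm]
    simp_rw [fun x y => hsymm y x]
    exact mutual_energy_le α R hα hR hDm hF hD hFsub
  have h3 : ∫⁻ x in F, ∫⁻ y in E, rieszKernel α x y
      ≤ (∫⁻ x in F, ∫⁻ y in F, rieszKernel α x y)
        + ∫⁻ x in F, ∫⁻ y in E \ F, rieszKernel α x y := by
    have hm : Measurable fun x => ∫⁻ y in F, rieszKernel α x y :=
      (measurable_rieszKernel α).lintegral_prod_right'
    rw [← lintegral_add_left hm]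
    exact lintegral_mono fun x => hsplit _
  calc _ ≤ _ := hsplit _
    _ ≤ _ := add_le_add (h3.trans (add_le_add le_rfl h2)) h1
    _ = _ := by rw [add_assoc, ← two_mul]

lemma riesz_energy_ne_top (α R : ℝ) (hα : α < 2) (hR : 0 < R)
    {E : Set (EuclideanSpace ℝ (Fin 2))} (hE : MeasurableSet E)
    (hEsub : E ⊆ Metric.ball 0 R) :
    ∫⁻ x in E, ∫⁻ y in E, rieszKernel α x y ≠ ⊤ :=
  ((mutual_energy_le α R hα hR hE hE hEsub hEsub).trans_lt
    (ENNReal.mul_lt_top ENNReal.ofReal_lt_top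
      ((measure_mono hEsub).trans_lt measure_ball_lt_top))).ne

/-- The iterated Bochner integral is the real value of the iterated `ℝ≥0∞`-valued one: the inner
integral is finite at every point of `E`. -/
lemma riesz_integral_eq_toReal (α R : ℝ) (hα : α < 2) (hR : 0 < R)
    {E : Set (EuclideanSpace ℝ (Fin 2))} (hE : MeasurableSet E)
    (hEsub : E ⊆ Metric.ball 0 R) :
    ∫ x in E, ∫ y in E, dist x y ^ (-α)
      = (∫⁻ x in E, ∫⁻ y in E, rieszKernel α x y).toReal := by
  have hin : ∀ x : EuclideanSpace ℝ (Fin 2), ∫ y in E, dist x y ^ (-α)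
      = (∫⁻ y in E, rieszKernel α x y).toReal := fun x =>
    integral_eq_lintegral_of_nonneg_ae (Filter.Eventually.of_forall fun y => by positivity)
      (Measurable.aestronglyMeasurable (by fun_prop))
  simp_rw [hin]
  refine integral_toReal ((measurable_rieszKernel α).lintegral_prod_right').aemeasurable ?_
  filter_upwards [ae_restrict_mem hE] with x hx
  exact (lintegral_riesz_le α R hα hR hE hEsub (hEsub hx)).trans_lt ENNReal.ofReal_lt_top

/-- Lipschitz continuity of the Riesz interaction energy: for `α ∈ (0,2)`, `R > 0`,
`C = 4π·(2R)^{2−α}/(2−α)`, and measurable sets `E, F ⊆ B_R ⊆ ℝ²`, the difference of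
the Riesz energies of `E` and `F` is bounded by `C·vol(E Δ F)`. -/
theorem riesz_energy_lipschitz (α R C : ℝ) (hα : α ∈ Set.Ioo (0 : ℝ) 2) (hR : 0 < R)
    (hC : C = 4 * Real.pi * (2 * R) ^ ((2 : ℝ) - α) / (2 - α))
    (E F : Set (EuclideanSpace ℝ (Fin 2)))
    (hE : MeasurableSet E) (hF : MeasurableSet F)
    (hEsub : E ⊆ Metric.ball 0 R) (hFsub : F ⊆ Metric.ball 0 R) :
    |(∫ x in E, ∫ y in E, dist x y ^ (-α)) - ∫ x in F, ∫ y in F, dist x y ^ (-α)|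
      ≤ C * (volume (E ∆ F)).toReal := by
  have hα2 := hα.2
  have hM : 0 ≤ 2 * Real.pi * (2 * R) ^ ((2 : ℝ) - α) / (2 - α) :=
    div_nonneg (by positivity) (by linarith)
  have hCM : C = 2 * (2 * Real.pi * (2 * R) ^ ((2 : ℝ) - α) / (2 - α)) := by rw [hC]; ring
  -- The real-valued one-sided bound, with `A \ B` enlarged to `E ∆ F`.
  have key : ∀ A B : Set (EuclideanSpace ℝ (Fin 2)), MeasurableSet A → MeasurableSet B →
      A ⊆ Metric.ball 0 R → B ⊆ Metric.ball 0 R → A \ B ⊆ E ∆ F →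
      (∫ x in A, ∫ y in A, dist x y ^ (-α))
        ≤ (∫ x in B, ∫ y in B, dist x y ^ (-α)) + C * (volume (E ∆ F)).toReal := by
    intro A B hA hB hAs hBs hAB
    have hfin : volume (E ∆ F) ≠ ⊤ := by
      refine ((measure_mono ?_).trans_lt (measure_ball_lt_top (x := 0) (r := R))).ne
      exact Set.symmDiff_subset_union.trans (Set.union_subset hEsub hFsub)
    have h := (riesz_energy_le α R hα2 hR hA hB hAs hBs).trans
      (add_le_add le_rfl (mul_le_mul_right (mul_le_mul_right (measure_mono hAB) _) 2))
    have hBtop := riesz_energy_ne_top α R hα2 hR hB hBs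
    have hrest : 2 * (ENNReal.ofReal (2 * Real.pi * (2 * R) ^ ((2 : ℝ) - α) / (2 - α))
        * volume (E ∆ F)) ≠ ⊤ :=
      ENNReal.mul_ne_top (by simp) (ENNReal.mul_ne_top ENNReal.ofReal_ne_top hfin)
    have h' := ENNReal.toReal_mono (ENNReal.add_ne_top.2 ⟨hBtop, hrest⟩) h
    rw [ENNReal.toReal_add hBtop hrest, ENNReal.toReal_mul, ENNReal.toReal_mul,
      ENNReal.toReal_ofReal hM, ← mul_assoc] at h'
    rw [riesz_integral_eq_toReal α R hα2 hR hA hAs, riesz_integral_eq_toReal α R hα2 hR hB hBs,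
      hCM]
    exact h'
  have h1 := key E F hE hF hEsub hFsub Set.subset_union_left
  have h2 := key F E hF hE hFsub hEsub Set.subset_union_right
  rw [abs_le]
  constructor <;> linarith
end
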